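/- Let $X$ be a nonempty set and $\overline{\mathbb R}=[-\infty,\infty]$, with the conventions $0\cdot\infty=0$ and $\infty+(-\infty)=\infty$. An outer probability content on $X$ is a functional $\mathcal E:\overline{\mathbb R}^X\to\overline{\mathbb R}$ such that, for all $f,g:X\to\overline{\mathbb R}$: (1) $\mathcal E(f)\le\mathcal E(g)$ if $f\le g$ pointwise; (2) $\mathcal E(cf)=c\,\mathcal E(f)$ for every real $c>0$; (3) $\mathcal E(f+g)\le\mathcal E(f)+\mathcal E(g)$; (4) $\mathcal E(c)=c$ for every real constant $c$. Fix outer probability contents $\mathcal E_1,\mathcal E_2,\dots$ on $X$. Let $\Omega=X^\infty$; a situation is a finite sequence $s\in X^*$, of length $|s|$; $\Gamma(s)\subseteq\Omega$ is the set of infinite sequences extending $s$; and $\omega^n$ is the prefix of length $n$ of $\omega\in\Omega$. A supermartingale is a function $S:X^*\to\overline{\mathbb R}$ such that $\mathcal E_n(x\mapsto S(tx))\le S(t)$ for every $n\ge1$ and every situation $t$ of length $n-1$. For $E\subseteq\Omega$ and a situation $s$, the conditional upper probability is $$\overline{\mathbb P}(E\mid s):=\inf\Bigl\{S(s): S\text{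 a bounded below supermartingale with }\liminf_{n\to\infty}S(\omega^n)\ge \mathbf 1_E(\omega)\text{ for all }\omega\in\Gamma(s)\Bigr\}.$$ Then, for every event $E\subseteq\Omega$ and every situation $s$, $$\overline{\mathbb P}(E\mid s)=\inf\Bigl\{S(s): S\text{ a nonnegative supermartingale with }\sup_{n\ge|s|}S(\omega^n)\ge1\text{ for all }\omega\in E\cap\Gamma(s)\Bigr\},$$ and the same value is obtained when $\sup_{n\ge|s|}$ is replaced by $\limsup_{n\to\infty}$ or by $\liminf_{n\to\infty}$. -/

import Mathlib

open Filter

namespace GTP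

noncomputable section

open Classical in
/-- Addition on `[-∞, ∞]` with the convention `∞ + (-∞) = (-∞) + ∞ = ∞`.
(Addition in Mathlib's `EReal` has the opposite convention `⊤ + ⊥ = ⊥`.) -/
def upAdd (a b : EReal) : EReal := if a = ⊤ ∨ b = ⊤ then ⊤ else a + b

/-- An *outer probability content* on `Y`: a functional on all `[-∞, ∞]`-valued functions
that is monotone, positively homogeneous, subadditive (with `∞ + (-∞) = ∞`), and maps
real constants to themselves. -/
structure IsOPC {Y : Type*} (E : (Y → EReal) → EReal) : Prop where
  mono : ∀ f g : Y → EReal, (∀ y, f y ≤ g y) → E f ≤ E g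
  smul : ∀ (c : ℝ), 0 < c → ∀ f : Y → EReal,
    E (fun y => (c : EReal) * f y) = (c : EReal) * E f
  add_le : ∀ f g : Y → EReal, E (fun y => upAdd (f y) (g y)) ≤ upAdd (E f) (E g)
  const : ∀ c : ℝ, E (fun _ => (c : EReal)) = (c : EReal)

/-- The length-`n` prefix `ω^n` of a sequence `ω ∈ Ω = X^∞`. -/
def pre {X : Type*} (ω : ℕ → X) (n : ℕ) : List X := List.ofFn fun i : Fin n => ω i

/-- `Γ(s)`: the set of infinite extensions of the situation `s`. -/
def Gamma {X : Type*} (s : List X) : Set (ℕ → X) := {ω | pre ω s.length = s}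

/-- A *supermartingale* with respect to the outer probability contents `E 0, E 1, …`;
`E n` governs the trial that is played in situations of length `n`, so `E n` is
`E_{n+1}` in the numbering of trials that starts at `1`. -/
def IsSupermartingale {X : Type*} (E : ℕ → (X → EReal) → EReal) (S : List X → EReal) : Prop :=
  ∀ s : List X, E s.length (fun x => S (s ++ [x])) ≤ S s

/-- A function to `[-∞, ∞]` that is bounded below by a real constant. -/
def BddBelowFn {Y : Type*} (S : Y → EReal) : Prop := ∃ c : ℝ, ∀ t, (c : EReal) ≤ S t

/-- The conditional upper expectation `Ē(ξ | s)`. -/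
def upExp {X : Type*} (E : ℕ → (X → EReal) → EReal) (ξ : (ℕ → X) → EReal) (s : List X) :
    EReal :=
  sInf {a | ∃ S : List X → EReal, IsSupermartingale E S ∧ BddBelowFn S ∧
    (∀ ω ∈ Gamma s, ξ ω ≤ liminf (fun n => S (pre ω n)) atTop) ∧ S s = a}

/-- The indicator function of an event, with values in `EReal`. -/
def ind {X : Type*} (A : Set (ℕ → X)) : (ℕ → X) → EReal := A.indicator fun _ => 1

/-- The conditional upper probability `P̄(A | s)`. -/
def upProb {X : Type*} (E : ℕ → (X → EReal) → EReal) (A : Set (ℕ → X)) (s : List X) : EReal :=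
  upExp E (ind A) s

end

end GTP

namespace GTP

variable {X : Type*} {E : ℕ → (X → EReal) → EReal} {S : List X → EReal}

theorem length_pre (ω : ℕ → X) (n : ℕ) : (pre ω n).length = n := by
  simp [pre]

theorem pre_succ (ω : ℕ → X) (n : ℕ) : pre ω (n + 1) = pre ω n ++ [ω n] := by
  rw [pre, List.ofFn_succ_last]
  rfl

theorem pre_prefix_pre (ω : ℕ → X) {m n : ℕ} (h : m ≤ n) : pre ω m <+: pre ω n := by
  induction n, h using Nat.le_induction with
  | base => exact List.prefix_refl _
  | succ n _ ih => exact ih.trans (pre_succ ω n ▸ List.prefix_append _ _)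

theorem prefix_pre_of_mem_Gamma {s : List X} {ω : ℕ → X} (hω : ω ∈ Gamma s) {n : ℕ}
    (h : s.length ≤ n) : s <+: pre ω n := by
  have := pre_prefix_pre ω h
  rwa [show pre ω s.length = s from hω] at this

theorem Gamma_subset_of_prefix {s t : List X} (h : s <+: t) : Gamma t ⊆ Gamma s := by
  intro ω hω
  have h1 := pre_prefix_pre ω h.length_le
  rw [show pre ω t.length = t from hω] at h1
  exact (List.prefix_of_prefix_length_le h1 h (length_pre ω _).le).eq_of_length (length_pre ω _)

theorem prefix_of_prefix_concat {s t : List X} {x : X} (h : s <+: t ++ [x])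
    (hne : s ≠ t ++ [x]) : s <+: t := by
  rcases List.prefix_concat_iff.1 h with h | h
  · exact absurd h hne
  · exact h

/-- Following the choice function `g` from the situation `t` onwards. -/
def follow (g : List X → X) (t : List X) : ℕ → List X
  | 0 => t
  | n + 1 => follow g t n ++ [g (follow g t n)]

theorem exists_pre_eq_follow (g : List X → X) (t : List X) :
    ∃ ω : ℕ → X, ∀ n, pre ω (t.length + n) = follow g t n := by
  refine ⟨fun k => if h : k < t.length then t[k] else g (follow g t (k - t.length)), fun n => ?_⟩
  induction n with
  | zero =>
    refine List.ext_getElem (by simp [length_pre, follow]) fun i h1 h2 => ?_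
    simp [pre, follow]
  | succ n ih =>
    rw [← Nat.add_assoc, pre_succ, ih]
    simp [follow]

/-- A supermartingale with nonnegative lower limits on all paths through `s` is nonnegative
from `s` onwards. -/
theorem IsSupermartingale.nonneg_of_liminf_nonneg [Nonempty X] (hE : ∀ n, IsOPC (E n))
    (hS : IsSupermartingale E S) {s : List X}
    (h : ∀ ω ∈ Gamma s, 0 ≤ liminf (fun n => S (pre ω n)) atTop) {t : List X} (hst : s <+: t) :
    0 ≤ S t := by
  by_contra! hlt
  obtain ⟨r, htr, hr⟩ := EReal.lt_iff_exists_real_btwn.1 hlt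
  have step : ∀ u, ∃ x, S u < r → S (u ++ [x]) < r := by
    intro u
    by_contra! hu
    have hur := (hu (Classical.arbitrary X)).1
    have := (hE u.length).mono (fun _ => (r : EReal)) (fun x => S (u ++ [x])) fun x => (hu x).2
    rw [(hE u.length).const] at this
    exact (this.trans (hS u)).not_gt hur
  choose g hg using step
  obtain ⟨ω, hω⟩ := exists_pre_eq_follow g t
  have hlow : ∀ n, S (follow g t n) < r := by
    intro n
    induction n with
    | zero => exact htr
    | succ n ih => exact hg _ ih
  have hωt : ω ∈ Gamma t := hω 0
  refine ((h ω (Gamma_subset_of_prefix hst hωt)).trans ?_).not_gt hr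
  refine liminf_le_of_frequently_le' (Eventually.frequently ?_)
  filter_upwards [eventually_ge_atTop t.length] with n hn
  obtain ⟨k, rfl⟩ := Nat.exists_eq_add_of_le hn
  rw [hω]
  exact (hlow k).le

open Classical in
/-- The process equal to `S` from `s` onwards and to `⊤` elsewhere. -/
noncomputable def restrictFrom (s : List X) (S : List X → EReal) (t : List X) : EReal :=
  if s <+: t then S t else ⊤

theorem restrictFrom_of_prefix {s t : List X} (h : s <+: t) : restrictFrom s S t = S t :=
  if_pos h

theorem isSupermartingale_restrictFrom {s : List X}
    (hS : ∀ t, s <+: t → E t.length (fun x => S (t ++ [x])) ≤ S t) :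
    IsSupermartingale E (restrictFrom s S) := by
  intro t
  by_cases h : s <+: t
  · simp only [restrictFrom_of_prefix h,
      restrictFrom_of_prefix (h.trans (List.prefix_append t _))]
    exact hS t h
  · simp [restrictFrom, h]

theorem restrictFrom_nonneg {s : List X} (h : ∀ t, s <+: t → 0 ≤ S t) (t : List X) :
    0 ≤ restrictFrom s S t := by
  unfold restrictFrom
  split_ifs with ht
  exacts [h t ht, le_top]

theorem eventually_restrictFrom_eq {s : List X} {ω : ℕ → X} (hω : ω ∈ Gamma s) :
    ∀ᶠ n in atTop, restrictFrom s S (pre ω n) = S (pre ω n) := by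
  filter_upwards [eventually_ge_atTop s.length] with n hn
  exact restrictFrom_of_prefix (prefix_pre_of_mem_Gamma hω hn)

/-- The process `S` has reached the level `1` at `t` or at a situation between `s` and `t`. -/
def ReachedOne (s : List X) (S : List X → EReal) (t : List X) : Prop :=
  ∃ u, s <+: u ∧ u <+: t ∧ 1 ≤ S u

theorem ReachedOne.of_prefix {s t u : List X} (h : ReachedOne s S t) (htu : t <+: u) :
    ReachedOne s S u :=
  let ⟨v, hsv, hvt, hv⟩ := h
  ⟨v, hsv, hvt.trans htu, hv⟩

open Classical in
/-- The process `S` frozen at the value `1` as soon as it reaches the level `1` after `s`. -/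
noncomputable def stopAtOne (s : List X) (S : List X → EReal) (t : List X) : EReal :=
  if ReachedOne s S t then 1 else S t

theorem IsSupermartingale.stopAtOne_step (hE : ∀ n, IsOPC (E n)) (hS : IsSupermartingale E S)
    (s t : List X) :
    E t.length (fun x => stopAtOne s S (t ++ [x])) ≤ stopAtOne s S t := by
  by_cases ht : ReachedOne s S t
  · simp only [stopAtOne, if_pos ht, if_pos (ht.of_prefix (List.prefix_append t _))]
    exact ((hE t.length).const 1).le
  · rw [show stopAtOne s S t = S t from if_neg ht]
    refine ((hE t.length).mono _ _ fun x => ?_).trans (hS t)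
    unfold stopAtOne
    split_ifs with hx
    · obtain ⟨u, hsu, hut, hu⟩ := hx
      by_cases h : u = t ++ [x]
      · exact h ▸ hu
      · exact absurd ⟨u, hsu, prefix_of_prefix_concat hut h, hu⟩ ht
    · exact le_rfl

theorem IsSupermartingale.const_mul (hE : ∀ n, IsOPC (E n)) (hS : IsSupermartingale E S)
    {c : ℝ} (hc : 0 < c) : IsSupermartingale E fun t => (c : EReal) * S t := by
  intro t
  rw [(hE t.length).smul c hc]
  exact mul_le_mul_of_nonneg_left (hS t) (EReal.coe_nonneg.2 hc.le)

theorem stopAtOne_self_le (s : List X) (S : List X → EReal) : stopAtOne s S s ≤ S s := by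
  unfold stopAtOne
  split_ifs with h
  · obtain ⟨u, hsu, hus, hu⟩ := h
    rwa [hus.eq_of_length_le hsu.length_le] at hu
  · exact le_rfl

theorem upProb_le_of_exists_one_le (hE : ∀ n, IsOPC (E n)) (hS : IsSupermartingale E S)
    (h0 : ∀ t, 0 ≤ S t) {A : Set (ℕ → X)} {s : List X}
    (hA : ∀ ω ∈ A ∩ Gamma s, ∃ n ≥ s.length, 1 ≤ S (pre ω n)) : upProb E A s ≤ S s := by
  have hn : ∀ t, 0 ≤ restrictFrom s (stopAtOne s S) t := by
    refine restrictFrom_nonneg fun t _ => ?_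
    unfold stopAtOne
    split_ifs
    exacts [zero_le_one, h0 t]
  refine le_trans ?_ (stopAtOne_self_le s S)
  refine sInf_le ⟨restrictFrom s (stopAtOne s S),
    isSupermartingale_restrictFrom fun t _ => hS.stopAtOne_step hE s t,
    ⟨0, by simpa using hn⟩, fun ω hω => ?_, restrictFrom_of_prefix (List.prefix_refl s)⟩
  by_cases hωA : ω ∈ A
  · obtain ⟨m, hm, h1⟩ := hA ω ⟨hωA, hω⟩
    rw [show ind A ω = 1 from Set.indicator_of_mem hωA _]
    refine le_liminf_of_le (by isBoundedDefault) ?_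
    filter_upwards [eventually_ge_atTop m, eventually_restrictFrom_eq hω] with n hn heq
    rw [heq, stopAtOne, if_pos]
    exact ⟨pre ω m, prefix_pre_of_mem_Gamma hω hm, pre_prefix_pre ω hn, h1⟩
  · rw [show ind A ω = 0 from Set.indicator_of_notMem hωA _]
    exact le_liminf_of_le (by isBoundedDefault) (Eventually.of_forall fun n => hn _)

/-- The game-theoretic Ville inequality. -/
theorem upProb_le_of_one_le_iSup (hE : ∀ n, IsOPC (E n)) (hS : IsSupermartingale E S)
    (h0 : ∀ t, 0 ≤ S t) {A : Set (ℕ → X)} {s : List X}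
    (hA : ∀ ω ∈ A ∩ Gamma s, (1 : EReal) ≤ ⨆ n ≥ s.length, S (pre ω n)) :
    upProb E A s ≤ S s := by
  have key : ∀ c : ℝ, 1 < c → upProb E A s ≤ c * S s := by
    intro c hc
    have hc0 : 0 < c := one_pos.trans hc
    refine upProb_le_of_exists_one_le hE (hS.const_mul hE hc0)
      (fun t => mul_nonneg (EReal.coe_nonneg.2 hc0.le) (h0 t)) fun ω hω => ?_
    have hlt : ((c⁻¹ : ℝ) : EReal) < ⨆ n ≥ s.length, S (pre ω n) :=
      lt_of_lt_of_le (by exact_mod_cast inv_lt_one_of_one_lt₀ hc) (hA ω hω)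
    obtain ⟨n, hn⟩ := lt_iSup_iff.1 hlt
    obtain ⟨hns, hn⟩ := lt_iSup_iff.1 hn
    refine ⟨n, hns, ?_⟩
    have := mul_le_mul_of_nonneg_left hn.le (EReal.coe_nonneg.2 hc0.le)
    rwa [← EReal.coe_mul, mul_inv_cancel₀ hc0.ne', EReal.coe_one] at this
  refine EReal.le_of_forall_lt_iff_le.1 fun b hb => ?_
  have h0s := h0 s
  lift S s to ℝ using ⟨hb.ne_top, (EReal.bot_lt_zero.trans_le h0s).ne'⟩ with a
  have ha : 0 ≤ a := by exact_mod_cast h0s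
  have hab : a < b := by exact_mod_cast hb
  refine (key ((b + 1) / (a + 1)) ((one_lt_div (by linarith)).2 (by linarith))).trans ?_
  rw [← EReal.coe_mul, EReal.coe_le_coe_iff, div_mul_eq_mul_div, div_le_iff₀ (by linarith)]
  nlinarith

theorem limsup_le_iSup_ge (f : ℕ → EReal) (m : ℕ) : limsup f atTop ≤ ⨆ n ≥ m, f n := by
  rw [limsup_eq_iInf_iSup_of_nat]
  exact iInf_le _ m

theorem sInf_liminf_le_upProb [Nonempty X] (hE : ∀ n, IsOPC (E n)) (A : Set (ℕ → X)) (s : List X) :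
    sInf {a | ∃ S : List X → EReal, IsSupermartingale E S ∧ (∀ t, 0 ≤ S t) ∧
      (∀ ω ∈ A ∩ Gamma s, (1 : EReal) ≤ liminf (fun n => S (pre ω n)) atTop) ∧ S s = a} ≤
      upProb E A s := by
  refine le_sInf ?_
  rintro _ ⟨S, hS, -, hlim, rfl⟩
  have h0 : ∀ t, s <+: t → 0 ≤ S t := fun t ht =>
    hS.nonneg_of_liminf_nonneg hE
      (fun ω hω => (Set.indicator_nonneg (fun _ _ => zero_le_one) ω).trans (hlim ω hω)) ht
  refine sInf_le ⟨restrictFrom s S, isSupermartingale_restrictFrom fun t _ => hS t,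
    restrictFrom_nonneg h0, fun ω hω => ?_, restrictFrom_of_prefix (List.prefix_refl s)⟩
  rw [liminf_congr (eventually_restrictFrom_eq hω.2)]
  exact (Set.indicator_of_mem hω.1 (fun _ => (1 : EReal))).symm.trans_le (hlim ω hω.2)

end GTP

/-- `P̄(A|s)` is the infimum of `S(s)` over the nonnegative supermartingales `S` with
`sup_{n ≥ |s|} S(ω^n) ≥ 1` for all `ω ∈ A ∩ Γ(s)`; the same value is obtained with
`limsup` or `liminf` in place of the supremum. -/
theorem upProb_eq_inf_nonneg {X : Type*} [Nonempty X]
    (E : ℕ → (X → EReal) → EReal) (hE : ∀ n, GTP.IsOPC (E n))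
    (A : Set (ℕ → X)) (s : List X) :
    GTP.upProb E A s =
      sInf {a | ∃ S : List X → EReal, GTP.IsSupermartingale E S ∧ (∀ t, 0 ≤ S t) ∧
        (∀ ω ∈ A ∩ GTP.Gamma s, (1 : EReal) ≤ ⨆ n ≥ s.length, S (GTP.pre ω n)) ∧
        S s = a} ∧
    GTP.upProb E A s =
      sInf {a | ∃ S : List X → EReal, GTP.IsSupermartingale E S ∧ (∀ t, 0 ≤ S t) ∧
        (∀ ω ∈ A ∩ GTP.Gamma s,
          (1 : EReal) ≤ limsup (fun n => S (GTP.pre ω n)) atTop) ∧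
        S s = a} ∧
    GTP.upProb E A s =
      sInf {a | ∃ S : List X → EReal, GTP.IsSupermartingale E S ∧ (∀ t, 0 ≤ S t) ∧
        (∀ ω ∈ A ∩ GTP.Gamma s,
          (1 : EReal) ≤ liminf (fun n => S (GTP.pre ω n)) atTop) ∧
        S s = a} := by
  have h₁ := le_sInf (a := GTP.upProb E A s)
    (s := {a | ∃ S : List X → EReal, GTP.IsSupermartingale E S ∧ (∀ t, 0 ≤ S t) ∧
      (∀ ω ∈ A ∩ GTP.Gamma s, (1 : EReal) ≤ ⨆ n ≥ s.length, S (GTP.pre ω n)) ∧ S s = a}) <| by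
    rintro _ ⟨S, hS, h0, hA, rfl⟩
    exact GTP.upProb_le_of_one_le_iSup hE hS h0 hA
  have h₂ : sInf {a | ∃ S : List X → EReal, GTP.IsSupermartingale E S ∧ (∀ t, 0 ≤ S t) ∧
      (∀ ω ∈ A ∩ GTP.Gamma s, (1 : EReal) ≤ ⨆ n ≥ s.length, S (GTP.pre ω n)) ∧ S s = a} ≤
      sInf {a | ∃ S : List X → EReal, GTP.IsSupermartingale E S ∧ (∀ t, 0 ≤ S t) ∧
      (∀ ω ∈ A ∩ GTP.Gamma s, (1 : EReal) ≤ limsup (fun n => S (GTP.pre ω n)) atTop) ∧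
      S s = a} :=
    sInf_le_sInf fun _ ⟨S, hS, h0, hA, ha⟩ =>
      ⟨S, hS, h0, fun ω hω => (hA ω hω).trans (GTP.limsup_le_iSup_ge _ _), ha⟩
  have h₃ : sInf {a | ∃ S : List X → EReal, GTP.IsSupermartingale E S ∧ (∀ t, 0 ≤ S t) ∧
      (∀ ω ∈ A ∩ GTP.Gamma s, (1 : EReal) ≤ limsup (fun n => S (GTP.pre ω n)) atTop) ∧
      S s = a} ≤
      sInf {a | ∃ S : List X → EReal, GTP.IsSupermartingale E S ∧ (∀ t, 0 ≤ S t) ∧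
      (∀ ω ∈ A ∩ GTP.Gamma s, (1 : EReal) ≤ liminf (fun n => S (GTP.pre ω n)) atTop) ∧
      S s = a} :=
    sInf_le_sInf fun _ ⟨S, hS, h0, hA, ha⟩ =>
      ⟨S, hS, h0, fun ω hω => (hA ω hω).trans liminf_le_limsup, ha⟩
  have h₄ := GTP.sInf_liminf_le_upProb hE A s
  exact ⟨h₁.antisymm (h₂.trans (h₃.trans h₄)), (h₁.trans h₂).antisymm (h₃.trans h₄),
    (h₁.trans (h₂.trans h₃)).antisymm h₄⟩
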